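/- arXiv:2010.03398 — 2 statements merged into one kernel-verified Lean document; each statement's English description precedes it below -/
import Mathlib

section
/- Let A be an n×N integer matrix (n<N) with columns a(1),…,a(N), let σ ⊆ {1,…,N} be a simplex with partition σ = σ^u ⊔ σ^d, let c ∈ ℂ^n be very generic with respect to σ, and let U ⊆ (ℂ∖(-∞,0])^N be an open set on which, for every k ∈ ℤ^n, the Γ-series ψ_{σ^d}^{σ^u}(z;c+k) is absolutely and locally uniformly summable. Then the Γ-series satisfies the contiguity relations: for every j = 1,…,N and every z ∈ U, (∂ψ_{σ^d}^{σ^u}/∂z_j)(z;c) = ψ_{σ^d}^{σ^u}(z; c + a(j)). (Note that c + a(j) is again very generic with respect to σ.) -/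
open Complex

/-- The term of the Γ-series `ψ_{σ^d}^{σ^u}(z;c)` indexed by `m ∈ ℤ_{≥0}^{σ̄}`.
Here `B` is the inverse of `A_σ` (as a complex matrix), so that
`p_{σ i}(v) = (B.mulVec v) i`. -/
noncomputable def gammaSeriesTerm {n N : ℕ} (A : Matrix (Fin n) (Fin N) ℤ)
    (σ σu σd : Finset (Fin N)) (B : Matrix {i : Fin N // i ∈ σ} (Fin n) ℂ)
    (z : Fin N → ℂ) (c : Fin n → ℂ) (m : {j : Fin N // j ∉ σ} → ℕ) : ℂ :=
  let pc : {i : Fin N // i ∈ σ} → ℂ :=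
    B.mulVec (fun r => c r + ∑ j : {j : Fin N // j ∉ σ}, (A r j.1 : ℂ) * (m j : ℂ))
  (∏ i : {i : Fin N // i ∈ σ}, if i.1 ∈ σu then Complex.Gamma (pc i) else 1) /
    ((∏ i : {i : Fin N // i ∈ σ}, if i.1 ∈ σd then Complex.Gamma (1 - pc i) else 1) *
      ∏ j : {j : Fin N // j ∉ σ}, ((m j).factorial : ℂ)) *
    (∏ i : {i : Fin N // i ∈ σ}, Complex.exp (-(pc i) *
      (Complex.log (z i.1) + (if i.1 ∈ σu then (Real.pi : ℂ) * Complex.I else 0)))) *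
    ∏ j : {j : Fin N // j ∉ σ}, z j.1 ^ (m j)

/-!
On each coordinate line a term of `ψ(z;c)` is a constant times either a power
`Γ(p) exp(-p (Log ζ + πi))` or `exp(-p Log ζ) / Γ(1 - p)` with `p = p_{σi}(c + A_{σ̄}m)`, or a
monomial `ζ ^ k / k!`. By the functional equation of `Γ`, differentiation raises `p` by one in the
first two and lowers `k` by one in the third. Since `p_{σi}(a(j)) = δ_{ij}` for `j ∈ σ`, and
`c + A_{σ̄}(m + e_j) = (c + a(j)) + A_{σ̄}m` for `j ∉ σ`, in both cases the result is a term of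
`ψ(z;c+a(j))`. Cauchy's estimate turns the domination of the terms into domination of
their derivatives, so a single dominated series `ψ(z;c)` may be differentiated term by term and
yields the convergence of all the `ψ(z;c+a(j))`.
-/

section Weierstrass

open Metric

variable {E F : Type*} [NormedAddCommGroup E] [NormedSpace ℂ E] [NormedAddCommGroup F]
  [NormedSpace ℂ F]

theorem norm_fderiv_le_of_forall_mem_ball_norm_le {f : E → F} {x : E} {r C : ℝ} (hr : 0 < r)
    (hf : DifferentiableOn ℂ f (ball x r)) (hC : ∀ y ∈ ball x r, ‖f y‖ ≤ C) :
    ‖fderiv ℂ f x‖ ≤ 2 * C / r := by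
  refine norm_fderiv_le_div_of_mapsTo_ball hf (fun y hy => ?_) hr
  rw [mem_closedBall, two_mul]
  exact (dist_le_norm_add_norm _ _).trans (add_le_add (hC y hy) (hC x (mem_ball_self hr)))

variable {ι : Type*} {f : ι → E → F} {u : ι → ℝ} {s : Set E} {x : E}

theorem exists_ball_norm_fderiv_le (hs : IsOpen s) (hf : ∀ i, DifferentiableOn ℂ (f i) s)
    (hfu : ∀ i, ∀ y ∈ s, ‖f i y‖ ≤ u i) (hx : x ∈ s) :
    ∃ r > 0, ball x r ⊆ s ∧ ∀ i, ∀ y ∈ ball x r, ‖fderiv ℂ (f i) y‖ ≤ 2 * u i / r := by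
  obtain ⟨R, hR, hRs⟩ := isOpen_iff.mp hs x hx
  refine ⟨R / 2, half_pos hR, (ball_subset_ball (half_le_self hR.le)).trans hRs, ?_⟩
  intro i y hy
  have hys : ball y (R / 2) ⊆ s :=
    (ball_subset_ball' (by linarith [mem_ball.mp hy])).trans hRs
  exact norm_fderiv_le_of_forall_mem_ball_norm_le (half_pos hR) ((hf i).mono hys)
    fun w hw => hfu i w (hys hw)

theorem summable_fderiv_of_summable_norm [CompleteSpace F] (hu : Summable u) (hs : IsOpen s)
    (hf : ∀ i, DifferentiableOn ℂ (f i) s) (hfu : ∀ i, ∀ y ∈ s, ‖f i y‖ ≤ u i) (hx : x ∈ s) :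
    Summable fun i => fderiv ℂ (f i) x := by
  obtain ⟨r, hr, -, hbound⟩ := exists_ball_norm_fderiv_le hs hf hfu hx
  exact ((hu.mul_left 2).div_const r).of_norm_bounded fun i => hbound i x (mem_ball_self hr)

theorem hasFDerivAt_tsum_of_summable_norm [CompleteSpace F] (hu : Summable u) (hs : IsOpen s)
    (hf : ∀ i, DifferentiableOn ℂ (f i) s) (hfu : ∀ i, ∀ y ∈ s, ‖f i y‖ ≤ u i) (hx : x ∈ s) :
    HasFDerivAt (fun y => ∑' i, f i y) (∑' i, fderiv ℂ (f i) x) x := by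
  obtain ⟨r, hr, hrs, hbound⟩ := exists_ball_norm_fderiv_le hs hf hfu hx
  have hxr : x ∈ ball x r := mem_ball_self hr
  exact hasFDerivAt_tsum_of_isPreconnected ((hu.mul_left 2).div_const r) isOpen_ball
    (convex_ball x r).isPreconnected
    (fun i y hy => ((hf i).differentiableAt (hs.mem_nhds (hrs hy))).hasFDerivAt) hbound hxr
    (hu.of_norm_bounded fun i => hfu i x hx) hxr

end Weierstrass

section SeparatedProduct

variable {𝕜 ι : Type*} [NontriviallyNormedField 𝕜] [Fintype ι] [DecidableEq ι]
  {f : ι → 𝕜 → 𝕜} {w : ι → 𝕜}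

theorem hasFDerivAt_prod_comp_apply {f' : ι → 𝕜} (hf : ∀ i, HasDerivAt (f i) (f' i) (w i)) :
    HasFDerivAt (fun v : ι → 𝕜 => ∏ i, f i (v i))
      (∑ i, (∏ k ∈ Finset.univ.erase i, f k (w k)) •
        f' i • ContinuousLinearMap.proj (R := 𝕜) (φ := fun _ : ι => 𝕜) i) w :=
  HasFDerivAt.finsetProd fun i _ => (hf i).comp_hasFDerivAt w (hasFDerivAt_apply i w)

theorem fderiv_prod_comp_apply_single (hf : ∀ i, DifferentiableAt 𝕜 (f i) (w i)) (j : ι) :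
    fderiv 𝕜 (fun v : ι → 𝕜 => ∏ i, f i (v i)) w (Pi.single j 1) =
      deriv (f j) (w j) * ∏ i ∈ Finset.univ.erase j, f i (w i) := by
  rw [(hasFDerivAt_prod_comp_apply fun i => (hf i).hasDerivAt).fderiv]
  simp [Pi.single_apply, mul_comm]

theorem fderiv_prod_comp_apply_single_eq_prod (hf : ∀ i, DifferentiableAt 𝕜 (f i) (w i))
    {g : ι → 𝕜} {j : ι} (hj : HasDerivAt (f j) (g j) (w j)) (hne : ∀ i ≠ j, f i (w i) = g i) :
    fderiv 𝕜 (fun v : ι → 𝕜 => ∏ i, f i (v i)) w (Pi.single j 1) = ∏ i, g i := by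
  rw [fderiv_prod_comp_apply_single hf, hj.deriv, ← Finset.mul_prod_erase _ g (Finset.mem_univ j)]
  congr 1
  exact Finset.prod_congr rfl fun i hi => hne i (Finset.ne_of_mem_erase hi)

end SeparatedProduct

section CoordinateFactors

/-- The factor `Γ(p) exp(-p (Log ζ + πi))` contributed to a term of a Γ-series by an index in
`σ^u` with exponent `p`. -/
noncomputable def gammaFactorUp (p ζ : ℂ) : ℂ :=
  Gamma p * exp (-p * (log ζ + Real.pi * I))

/-- The factor `exp(-p Log ζ) / Γ(1 - p)` contributed to a term of a Γ-series by an index in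
`σ^d` with exponent `p`. -/
noncomputable def gammaFactorDown (p ζ : ℂ) : ℂ :=
  (Gamma (1 - p))⁻¹ * exp (-p * log ζ)

variable {ζ : ℂ}

theorem hasDerivAt_exp_neg_mul_log_add (p a : ℂ) (hζ : ζ ∈ slitPlane) :
    HasDerivAt (fun t => exp (-p * (log t + a)))
      (-p * (exp a * exp (-(p + 1) * (log ζ + a)))) ζ := by
  have hζ0 : ζ ≠ 0 := slitPlane_ne_zero hζ
  refine (((hasDerivAt_log hζ).add_const a).const_mul (-p)).cexp.congr_deriv ?_
  have hexp : exp (-p * (log ζ + a)) = exp (-(p + 1) * (log ζ + a)) * (ζ * exp a) := by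
    rw [show -p * (log ζ + a) = -(p + 1) * (log ζ + a) + (log ζ + a) by ring, exp_add,
      exp_add (log ζ), exp_log hζ0]
  rw [hexp]
  field_simp

theorem hasDerivAt_gammaFactorUp {p : ℂ} (hp : p ≠ 0) (hζ : ζ ∈ slitPlane) :
    HasDerivAt (gammaFactorUp p) (gammaFactorUp (p + 1) ζ) ζ := by
  refine ((hasDerivAt_exp_neg_mul_log_add p (Real.pi * I) hζ).const_mul (Gamma p)).congr_deriv ?_
  rw [gammaFactorUp, Gamma_add_one p hp, exp_pi_mul_I]
  ring

theorem hasDerivAt_gammaFactorDown (p : ℂ) (hζ : ζ ∈ slitPlane) :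
    HasDerivAt (gammaFactorDown p) (gammaFactorDown (p + 1) ζ) ζ := by
  have hΓ : (Gamma (-p))⁻¹ = -p * (Gamma (1 - p))⁻¹ := by
    rw [one_div_Gamma_eq_self_mul_one_div_Gamma_add_one, neg_add_eq_sub]
  have hexp := (hasDerivAt_exp_neg_mul_log_add p 0 hζ).const_mul (Gamma (1 - p))⁻¹
  simp only [add_zero, exp_zero, one_mul] at hexp
  refine hexp.congr_deriv ?_
  rw [gammaFactorDown, sub_add_cancel_right, hΓ]
  ring

theorem hasDerivAt_pow_succ_div_factorial {𝕜 : Type*} [NontriviallyNormedField 𝕜] [CharZero 𝕜]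
    (k : ℕ) (x : 𝕜) :
    HasDerivAt (fun t : 𝕜 => t ^ (k + 1) / ((k + 1).factorial : 𝕜))
      (x ^ k / (k.factorial : 𝕜)) x := by
  refine ((hasDerivAt_pow (k + 1) x).div_const _).congr_deriv ?_
  rw [Nat.factorial_succ, Nat.add_sub_cancel, Nat.cast_mul,
    mul_div_mul_left _ _ (Nat.cast_ne_zero.mpr k.succ_ne_zero)]

end CoordinateFactors

section Exponents

/-- The exponents `p_{σi}(c + A_{σ̄}m)`, `i ∈ σ`, where `B` is the inverse of `A_σ`. -/
noncomputable def gammaExponent {n N : ℕ} (A : Matrix (Fin n) (Fin N) ℤ) (σ : Finset (Fin N))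
    (B : Matrix {i // i ∈ σ} (Fin n) ℂ) (c : Fin n → ℂ) (m : {j // j ∉ σ} → ℕ) :
    {i // i ∈ σ} → ℂ :=
  B.mulVec fun r => c r + ∑ j : {j // j ∉ σ}, (A r j.1 : ℂ) * (m j : ℂ)

variable {n N : ℕ} {A : Matrix (Fin n) (Fin N) ℤ} {σ : Finset (Fin N)}
  {B : Matrix {i // i ∈ σ} (Fin n) ℂ}

theorem gammaExponent_add_col_of_mem
    (hB : B * (Matrix.of fun r (i : {i // i ∈ σ}) => ((A r i.1 : ℤ) : ℂ)) = 1)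
    (c : Fin n → ℂ) (m : {j // j ∉ σ} → ℕ) (j : {i // i ∈ σ}) :
    gammaExponent A σ B (fun r => c r + (A r j.1 : ℂ)) m =
      gammaExponent A σ B c m + Pi.single j 1 := by
  have hcol : B.mulVec (fun r => (A r j.1 : ℂ)) = Pi.single j 1 := by
    funext i
    rw [Pi.single_apply, ← Matrix.one_apply, ← hB]
    rfl
  rw [gammaExponent, gammaExponent, ← hcol, ← Matrix.mulVec_add]
  congr 1
  funext r
  exact add_right_comm _ _ _

theorem gammaExponent_add_single (c : Fin n → ℂ) (m : {j // j ∉ σ} → ℕ) (j : {j // j ∉ σ}) :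
    gammaExponent A σ B c (m + Pi.single j 1) =
      gammaExponent A σ B (fun r => c r + (A r j.1 : ℂ)) m := by
  unfold gammaExponent
  congr 1
  funext r
  simp only [Pi.add_apply, Pi.single_apply, Nat.cast_add, Nat.cast_ite, Nat.cast_one,
    Nat.cast_zero, mul_add, mul_ite, mul_one, mul_zero, Finset.sum_add_distrib,
    Finset.sum_ite_eq', Finset.mem_univ, if_true]
  ring

/-- The vector `c` is very generic: no entry of `B (c + k)`, `k` integral, is an integer. For
`B = A_σ⁻¹` this is genericity with respect to the simplex `σ`. -/
def IsVeryGeneric {ι κ : Type*} [Fintype κ] (B : Matrix ι κ ℂ) (c : κ → ℂ) : Prop :=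
  ∀ (k : κ → ℤ) (i : ι) (m : ℤ), B.mulVec (fun r => c r + (k r : ℂ)) i ≠ (m : ℂ)

theorem IsVeryGeneric.add_intCast {ι κ : Type*} [Fintype κ] {B : Matrix ι κ ℂ} {c : κ → ℂ}
    (hc : IsVeryGeneric B c) (l : κ → ℤ) : IsVeryGeneric B fun r => c r + (l r : ℂ) := by
  intro k i m
  simpa only [Int.cast_add, ← add_assoc] using hc (fun r => l r + k r) i m

theorem IsVeryGeneric.gammaExponent_ne_neg_natCast {c : Fin n → ℂ} (hc : IsVeryGeneric B c)
    (m : {j // j ∉ σ} → ℕ) (i : {i // i ∈ σ}) (k : ℕ) :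
    gammaExponent A σ B c m i ≠ -k := by
  have h := hc (fun r => ∑ j : {j // j ∉ σ}, A r j.1 * (m j : ℤ)) i (-k)
  push_cast at h
  exact h

end Exponents

section Terms

/-- The factor of the `m`-th term of a Γ-series that depends on the coordinate `z_i`. -/
noncomputable def gammaSeriesFactor {n N : ℕ} (A : Matrix (Fin n) (Fin N) ℤ)
    (σ σu : Finset (Fin N)) (B : Matrix {i // i ∈ σ} (Fin n) ℂ) (c : Fin n → ℂ)
    (m : {j // j ∉ σ} → ℕ) (i : Fin N) (ζ : ℂ) : ℂ :=
  if hi : i ∈ σ then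
    if i ∈ σu then gammaFactorUp (gammaExponent A σ B c m ⟨i, hi⟩) ζ
    else gammaFactorDown (gammaExponent A σ B c m ⟨i, hi⟩) ζ
  else ζ ^ m ⟨i, hi⟩ / ((m ⟨i, hi⟩).factorial : ℂ)

variable {n N : ℕ} {A : Matrix (Fin n) (Fin N) ℤ} {σ σu σd : Finset (Fin N)}
  {B : Matrix {i // i ∈ σ} (Fin n) ℂ}

theorem gammaSeriesTerm_eq_prod (hpart : σu ∪ σd = σ) (hdisj : Disjoint σu σd)
    (c : Fin n → ℂ) (m : {j // j ∉ σ} → ℕ) (z : Fin N → ℂ) :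
    gammaSeriesTerm A σ σu σd B z c m = ∏ i, gammaSeriesFactor A σ σu B c m i (z i) := by
  have hsimplex (i : {i // i ∈ σ}) : gammaSeriesFactor A σ σu B c m i.1 (z i.1) =
      (if i.1 ∈ σu then Gamma (gammaExponent A σ B c m i) else 1) /
        (if i.1 ∈ σd then Gamma (1 - gammaExponent A σ B c m i) else 1) *
        exp (-(gammaExponent A σ B c m i) *
          (log (z i.1) + (if i.1 ∈ σu then (Real.pi : ℂ) * I else 0))) := by
    by_cases hu : i.1 ∈ σu
    · have hd : i.1 ∉ σd := Finset.disjoint_left.mp hdisj hu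
      simp [gammaSeriesFactor, gammaFactorUp, hu, hd]
    · have hd : i.1 ∈ σd := (Finset.mem_union.mp (hpart.symm ▸ i.2)).resolve_left hu
      simp [gammaSeriesFactor, gammaFactorDown, hu, hd]
  have hmonomial (j : {j // j ∉ σ}) : gammaSeriesFactor A σ σu B c m j.1 (z j.1) =
      z j.1 ^ m j / ((m j).factorial : ℂ) := dif_neg j.2
  have hsplit : ∏ i, gammaSeriesFactor A σ σu B c m i (z i) =
      (∏ i : {i // i ∈ σ}, gammaSeriesFactor A σ σu B c m i.1 (z i.1)) *
        ∏ j : {j // j ∉ σ}, gammaSeriesFactor A σ σu B c m j.1 (z j.1) := by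
    rw [← Fintype.prod_subtype_mul_prod_subtype (· ∈ σ)]
    congr!
  rw [hsplit]
  simp only [hsimplex, hmonomial, Finset.prod_mul_distrib, Finset.prod_div_distrib]
  simp only [gammaSeriesTerm, gammaExponent]
  ring

theorem differentiableAt_gammaSeriesFactor (c : Fin n → ℂ) (m : {j // j ∉ σ} → ℕ) (i : Fin N)
    {ζ : ℂ} (hζ : ζ ∈ slitPlane) :
    DifferentiableAt ℂ (gammaSeriesFactor A σ σu B c m i) ζ := by
  unfold gammaSeriesFactor gammaFactorUp gammaFactorDown
  split_ifs <;> fun_prop (disch := assumption)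

variable {w : Fin N → ℂ}

theorem differentiableAt_gammaSeriesTerm (hpart : σu ∪ σd = σ) (hdisj : Disjoint σu σd)
    (c : Fin n → ℂ) (m : {j // j ∉ σ} → ℕ) (hw : ∀ i, w i ∈ slitPlane) :
    DifferentiableAt ℂ (fun v => gammaSeriesTerm A σ σu σd B v c m) w := by
  simp only [gammaSeriesTerm_eq_prod hpart hdisj]
  exact (hasFDerivAt_prod_comp_apply fun i =>
    (differentiableAt_gammaSeriesFactor c m i (hw i)).hasDerivAt).differentiableAt

theorem fderiv_gammaSeriesTerm_apply_single_of_mem (hpart : σu ∪ σd = σ)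
    (hdisj : Disjoint σu σd)
    (hB : B * (Matrix.of fun r (i : {i // i ∈ σ}) => ((A r i.1 : ℤ) : ℂ)) = 1)
    {c : Fin n → ℂ} {m : {j // j ∉ σ} → ℕ} (j : {i // i ∈ σ})
    (hp : j.1 ∈ σu → gammaExponent A σ B c m j ≠ 0) (hw : ∀ i, w i ∈ slitPlane) :
    fderiv ℂ (fun v => gammaSeriesTerm A σ σu σd B v c m) w (Pi.single j.1 1) =
      gammaSeriesTerm A σ σu σd B w (fun r => c r + (A r j.1 : ℂ)) m := by
  simp only [gammaSeriesTerm_eq_prod hpart hdisj]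
  refine fderiv_prod_comp_apply_single_eq_prod
    (fun i => differentiableAt_gammaSeriesFactor c m i (hw i)) ?_ fun i hij => ?_
  · unfold gammaSeriesFactor
    simp only [dif_pos j.2, gammaExponent_add_col_of_mem hB, Pi.add_apply, Pi.single_eq_same]
    split_ifs with hu
    · exact hasDerivAt_gammaFactorUp (hp hu) (hw j)
    · exact hasDerivAt_gammaFactorDown _ (hw j)
  · have hexponent (hi : i ∈ σ) : (Pi.single j 1 : {i // i ∈ σ} → ℂ) ⟨i, hi⟩ = 0 :=
      Pi.single_eq_of_ne (fun h => hij (congrArg Subtype.val h)) _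
    simp only [gammaSeriesFactor, gammaExponent_add_col_of_mem hB, Pi.add_apply, hexponent,
      add_zero]

theorem fderiv_gammaSeriesTerm_add_single_apply_single (hpart : σu ∪ σd = σ)
    (hdisj : Disjoint σu σd) (c : Fin n → ℂ) (m : {j // j ∉ σ} → ℕ) (j : {j // j ∉ σ})
    (hw : ∀ i, w i ∈ slitPlane) :
    fderiv ℂ (fun v => gammaSeriesTerm A σ σu σd B v c (m + Pi.single j 1)) w
        (Pi.single j.1 1) =
      gammaSeriesTerm A σ σu σd B w (fun r => c r + (A r j.1 : ℂ)) m := by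
  simp only [gammaSeriesTerm_eq_prod hpart hdisj]
  refine fderiv_prod_comp_apply_single_eq_prod
    (fun i => differentiableAt_gammaSeriesFactor c _ i (hw i)) ?_ fun i hij => ?_
  · unfold gammaSeriesFactor
    simp only [dif_neg j.2, Pi.add_apply, Pi.single_eq_same]
    exact hasDerivAt_pow_succ_div_factorial (m j) (w j)
  · have hpower (hi : i ∉ σ) : (Pi.single j 1 : {j // j ∉ σ} → ℕ) ⟨i, hi⟩ = 0 :=
      Pi.single_eq_of_ne (fun h => hij (congrArg Subtype.val h)) _
    simp only [gammaSeriesFactor, gammaExponent_add_single, Pi.add_apply, hpower, add_zero]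

theorem fderiv_gammaSeriesTerm_apply_single_of_eq_zero (hpart : σu ∪ σd = σ)
    (hdisj : Disjoint σu σd) (c : Fin n → ℂ) {m : {j // j ∉ σ} → ℕ} {j : {j // j ∉ σ}}
    (hm : m j = 0) (hw : ∀ i, w i ∈ slitPlane) :
    fderiv ℂ (fun v => gammaSeriesTerm A σ σu σd B v c m) w (Pi.single j.1 1) = 0 := by
  have hconst : gammaSeriesFactor A σ σu B c m j.1 = fun _ => 1 := by
    funext ζ
    simp [gammaSeriesFactor, j.2, hm]
  simp only [gammaSeriesTerm_eq_prod hpart hdisj]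
  rw [fderiv_prod_comp_apply_single fun i => differentiableAt_gammaSeriesFactor c m i (hw i),
    hconst, deriv_const, zero_mul]

theorem hasSum_gammaSeriesTerm_add_col_of_hasSum_fderiv (hpart : σu ∪ σd = σ)
    (hdisj : Disjoint σu σd)
    (hB : B * (Matrix.of fun r (i : {i // i ∈ σ}) => ((A r i.1 : ℤ) : ℂ)) = 1)
    {c : Fin n → ℂ}
    (hp : ∀ (m : {j // j ∉ σ} → ℕ) (i : {i // i ∈ σ}), i.1 ∈ σu →
      gammaExponent A σ B c m i ≠ 0)
    (hw : ∀ i, w i ∈ slitPlane) {j : Fin N} {d : ℂ}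
    (hd : HasSum
      (fun m => fderiv ℂ (fun v => gammaSeriesTerm A σ σu σd B v c m) w (Pi.single j 1)) d) :
    HasSum (fun m => gammaSeriesTerm A σ σu σd B w (fun r => c r + (A r j : ℂ)) m) d := by
  by_cases hj : j ∈ σ
  · simpa only [fun m => fderiv_gammaSeriesTerm_apply_single_of_mem hpart hdisj hB ⟨j, hj⟩
      (hp m ⟨j, hj⟩) hw] using hd
  · have hshift : Function.Injective (· + Pi.single ⟨j, hj⟩ 1 : ({j // j ∉ σ} → ℕ) → _) :=
      add_left_injective _
    have hzero : ∀ m ∉ Set.range (· + Pi.single ⟨j, hj⟩ 1 : ({j // j ∉ σ} → ℕ) → _),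
        fderiv ℂ (fun v => gammaSeriesTerm A σ σu σd B v c m) w (Pi.single j 1) = 0 := by
      intro m hm
      refine fderiv_gammaSeriesTerm_apply_single_of_eq_zero hpart hdisj c (j := ⟨j, hj⟩) ?_ hw
      by_contra hmj
      exact hm ⟨m - Pi.single ⟨j, hj⟩ 1, tsub_add_cancel_of_le <| update_le_iff.mpr
        ⟨Nat.one_le_iff_ne_zero.mpr hmj, fun _ _ => Nat.zero_le _⟩⟩
    convert (hshift.hasSum_iff hzero).mpr hd using 2 with m
    exact (fderiv_gammaSeriesTerm_add_single_apply_single hpart hdisj c m ⟨j, hj⟩ hw).symm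

end Terms

theorem gammaSeries_contiguity_general {n N : ℕ} {A : Matrix (Fin n) (Fin N) ℤ}
    {σ σu σd : Finset (Fin N)} (hpart : σu ∪ σd = σ) (hdisj : Disjoint σu σd)
    {B : Matrix {i // i ∈ σ} (Fin n) ℂ}
    (hB : B * (Matrix.of fun r (i : {i // i ∈ σ}) => ((A r i.1 : ℤ) : ℂ)) = 1)
    {c : Fin n → ℂ}
    (hpole : ∀ (m : {j // j ∉ σ} → ℕ) (i : {i // i ∈ σ}), i.1 ∈ σu → ∀ k : ℕ,
      gammaExponent A σ B c m i ≠ -k)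
    {V : Set (Fin N → ℂ)} (hV : IsOpen V) (hVslit : ∀ z ∈ V, ∀ j, z j ∈ slitPlane)
    {g : ({j // j ∉ σ} → ℕ) → ℝ} (hg : Summable g)
    (hbound : ∀ z ∈ V, ∀ m, ‖gammaSeriesTerm A σ σu σd B z c m‖ ≤ g m)
    {z : Fin N → ℂ} (hz : z ∈ V) :
    DifferentiableAt ℂ (fun w => ∑' m, gammaSeriesTerm A σ σu σd B w c m) z ∧
    ∀ j, HasSum (fun m => gammaSeriesTerm A σ σu σd B z (fun r => c r + (A r j : ℂ)) m)
      (fderiv ℂ (fun w => ∑' m, gammaSeriesTerm A σ σu σd B w c m) z (Pi.single j 1)) := by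
  have hterm (m) : DifferentiableOn ℂ (fun w => gammaSeriesTerm A σ σu σd B w c m) V := fun w hw =>
    (differentiableAt_gammaSeriesTerm hpart hdisj c m (hVslit w hw)).differentiableWithinAt
  have hderiv := hasFDerivAt_tsum_of_summable_norm hg hV hterm (fun m w hw => hbound w hw m) hz
  refine ⟨hderiv.differentiableAt, fun j => ?_⟩
  rw [hderiv.fderiv]
  refine hasSum_gammaSeriesTerm_add_col_of_hasSum_fderiv hpart hdisj hB
    (fun m i hi => by simpa using hpole m i hi 0) (hVslit z hz) ?_
  exact (ContinuousLinearMap.apply ℂ ℂ (Pi.single j 1 : Fin N → ℂ)).hasSum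
    (summable_fderiv_of_summable_norm hg hV hterm (fun m w hw => hbound w hw m) hz).hasSum

/-- on an open set `U` (contained in the slit-plane polydomain) where, for
every shift `c + k` (`k ∈ ℤⁿ`), the Γ-series is absolutely and locally uniformly
summable, the Γ-series satisfies the contiguity relations
`∂_j ψ(z;c) = ψ(z;c+a(j))`; moreover `c + a(j)` is again very generic. -/
theorem gammaSeries_contiguity {n N : ℕ} (hn : n < N)
    (A : Matrix (Fin n) (Fin N) ℤ)
    (σ σu σd : Finset (Fin N)) (hσcard : σ.card = n)
    (hpart : σu ∪ σd = σ) (hdisj : Disjoint σu σd)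
    (B : Matrix {i : Fin N // i ∈ σ} (Fin n) ℂ)
    (hB1 : (Matrix.of fun r (i : {i : Fin N // i ∈ σ}) => ((A r i.1 : ℤ) : ℂ)) * B = 1)
    (hB2 : B * (Matrix.of fun r (i : {i : Fin N // i ∈ σ}) => ((A r i.1 : ℤ) : ℂ)) = 1)
    (c : Fin n → ℂ)
    (hc : ∀ (k : Fin n → ℤ) (i : {i : Fin N // i ∈ σ}) (m : ℤ),
      B.mulVec (fun r => c r + (k r : ℂ)) i ≠ (m : ℂ))
    (U : Set (Fin N → ℂ)) (hUopen : IsOpen U)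
    (hUslit : ∀ z ∈ U, ∀ j : Fin N, z j ∈ Complex.slitPlane)
    (hAbs : ∀ (k : Fin n → ℤ), ∀ z ∈ U,
      Summable (fun m : {j : Fin N // j ∉ σ} → ℕ =>
        ‖gammaSeriesTerm A σ σu σd B z (fun r => c r + (k r : ℂ)) m‖))
    (hLocUnif : ∀ (k : Fin n → ℤ), ∀ z₀ ∈ U,
      ∃ (V : Set (Fin N → ℂ)) (g : ({j : Fin N // j ∉ σ} → ℕ) → ℝ),
      IsOpen V ∧ z₀ ∈ V ∧ V ⊆ U ∧ Summable g ∧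
      ∀ z ∈ V, ∀ m : {j : Fin N // j ∉ σ} → ℕ,
        ‖gammaSeriesTerm A σ σu σd B z (fun r => c r + (k r : ℂ)) m‖ ≤ g m) :
    (∀ (j : Fin N) (k : Fin n → ℤ) (i : {i : Fin N // i ∈ σ}) (m : ℤ),
      B.mulVec (fun r => (c r + (A r j : ℂ)) + (k r : ℂ)) i ≠ (m : ℂ)) ∧
    ∀ (j : Fin N), ∀ z ∈ U,
      fderiv ℂ (fun w => ∑' m : {j : Fin N // j ∉ σ} → ℕ,
        gammaSeriesTerm A σ σu σd B w c m) z (Pi.single j 1)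
      = ∑' m : {j : Fin N // j ∉ σ} → ℕ,
          gammaSeriesTerm A σ σu σd B z (fun r => c r + (A r j : ℂ)) m := by
  have hgen : IsVeryGeneric B c := hc
  refine ⟨fun j => hgen.add_intCast fun r => A r j, fun j z hz => ?_⟩
  obtain ⟨V, g, hV, hzV, hVU, hg, hbound⟩ := hLocUnif 0 z hz
  exact ((gammaSeries_contiguity_general hpart hdisj hB2
    (fun m i _ => hgen.gammaExponent_ne_neg_natCast m i) hV (fun w hw => hUslit w (hVU hw)) hg
    (by simpa using hbound) hzV).2 j).tsum_eq.symm
end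

section
/- Let A be an n×N integer matrix whose columns a(1),…,a(N) span ℚ^n over ℚ, let a(N+1) ∈ ℤ^n, let Ã = (A | a(N+1)), let M be a left R_A-module, and equip M[[t]] with the left R_Ã-action in which z_j, ∂_j (1 ≤ j ≤ N), c_i, τ_i^{±1} act coefficientwise, z_{N+1} acts as multiplication by t, and ∂_{N+1} acts as formal differentiation d/dt. Then the boundary value map bv : Hom_{R_Ã}(GG(Ã), M[[t]]) → Hom_{R_A}(GG(A), M), which sends F to the unique R_A-linear map GG(A) → M taking [1] to the constant (t^0) coefficient of F([1]), is a well-defined bijection, and its inverse is the map 𝔇 which sends f ∈ Hom_{R_A}(GG(A), M) to the unique R_Ã-linear map GG(Ã) → M[[t]] taking [1] to Σ_{m=0}^∞ f([τ^{m·a(N+1)}]) · t^m/m!. -/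
/-- Generators of the difference-differential ring `R_A`: `z j`, `∂ j`, `c i`,
`τ i` and `τ i ⁻¹`. -/
inductive GGGen (n N : ℕ) : Type
  | z (j : Fin N)
  | d (j : Fin N)
  | c (i : Fin n)
  | t (i : Fin n)
  | tinv (i : Fin n)

/-- The pairs of generators that do NOT commute by decree (their products are governed
by the explicit relations instead). -/
def GGGen.NonCommPair {n N : ℕ} : GGGen n N → GGGen n N → Prop
  | .t i, .c i' => i = i'
  | .c i, .t i' => i = i'
  | .tinv i, .c i' => i = i'
  | .c i, .tinv i' => i = i'
  | .d j, .z j' => j = j'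
  | .z j, .d j' => j = j'
  | .t i, .tinv i' => i = i'
  | .tinv i, .t i' => i = i'
  | _, _ => False

/-- The defining relations of `R_A` on the free algebra:
`τᵢcᵢ = (cᵢ+1)τᵢ`, `τᵢ⁻¹cᵢ = (cᵢ−1)τᵢ⁻¹`, `∂ⱼzⱼ = zⱼ∂ⱼ + 1`, `τᵢτᵢ⁻¹ = τᵢ⁻¹τᵢ = 1`,
and all other pairs of generators commute. -/
inductive GGRel (n N : ℕ) :
    FreeAlgebra ℂ (GGGen n N) → FreeAlgebra ℂ (GGGen n N) → Prop
  | tc (i : Fin n) : GGRel n N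
      (FreeAlgebra.ι ℂ (GGGen.t i) * FreeAlgebra.ι ℂ (GGGen.c i))
      ((FreeAlgebra.ι ℂ (GGGen.c i) + 1) * FreeAlgebra.ι ℂ (GGGen.t i))
  | tinvc (i : Fin n) : GGRel n N
      (FreeAlgebra.ι ℂ (GGGen.tinv i) * FreeAlgebra.ι ℂ (GGGen.c i))
      ((FreeAlgebra.ι ℂ (GGGen.c i) - 1) * FreeAlgebra.ι ℂ (GGGen.tinv i))
  | dz (j : Fin N) : GGRel n N
      (FreeAlgebra.ι ℂ (GGGen.d j) * FreeAlgebra.ι ℂ (GGGen.z j))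
      (FreeAlgebra.ι ℂ (GGGen.z j) * FreeAlgebra.ι ℂ (GGGen.d j) + 1)
  | ttinv (i : Fin n) : GGRel n N
      (FreeAlgebra.ι ℂ (GGGen.t i) * FreeAlgebra.ι ℂ (GGGen.tinv i)) 1
  | tinvt (i : Fin n) : GGRel n N
      (FreeAlgebra.ι ℂ (GGGen.tinv i) * FreeAlgebra.ι ℂ (GGGen.t i)) 1
  | comm (g h : GGGen n N) (hc : ¬ GGGen.NonCommPair g h) : GGRel n N
      (FreeAlgebra.ι ℂ g * FreeAlgebra.ι ℂ h)
      (FreeAlgebra.ι ℂ h * FreeAlgebra.ι ℂ g)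

/-- The ring `R_A` of difference-differential operators (it depends only on `n`, `N`). -/
abbrev GGRing (n N : ℕ) : Type := RingQuot (GGRel n N)

/-- The image of a generator in `R_A`. -/
noncomputable def GGRing.gen {n N : ℕ} (g : GGGen n N) : GGRing n N :=
  RingQuot.mkAlgHom ℂ (GGRel n N) (FreeAlgebra.ι ℂ g)

/-- `τᵢ^k` for `k ∈ ℤ`, using `τᵢ⁻¹` for negative exponents. -/
noncomputable def GGRing.tpow {n N : ℕ} (i : Fin n) (k : ℤ) : GGRing n N :=
  if 0 ≤ k then GGRing.gen (GGGen.t i) ^ k.toNat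
  else GGRing.gen (GGGen.tinv i) ^ (-k).toNat

/-- `τ^v = ∏ᵢ τᵢ^{vᵢ}` for `v ∈ ℤⁿ`. -/
noncomputable def GGRing.tauPow {n N : ℕ} (v : Fin n → ℤ) : GGRing n N :=
  (List.ofFn fun i => GGRing.tpow (N := N) i (v i)).prod

/-- The Euler operator `E_i = Σ_j a_{ij} z_j ∂_j + c_i` in `R_A`. -/
noncomputable def GGRing.euler {n N : ℕ} (A : Matrix (Fin n) (Fin N) ℤ) (i : Fin n) :
    GGRing n N :=
  (∑ j : Fin N, (A i j : GGRing n N) * GGRing.gen (GGGen.z j) * GGRing.gen (GGGen.d j))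
    + GGRing.gen (GGGen.c i)

/-- The left ideal `I_A ⊆ R_A` generated by the `E_i` and the `∂_j − τ^{a(j)}`. -/
noncomputable def GGIdeal {n N : ℕ} (A : Matrix (Fin n) (Fin N) ℤ) :
    Submodule (GGRing n N) (GGRing n N) :=
  Submodule.span (GGRing n N)
    (Set.range (GGRing.euler A) ∪
      Set.range (fun j : Fin N =>
        GGRing.gen (GGGen.d j) - GGRing.tauPow (fun i => A i j)))

/-- The GG system `GG(A) = R_A/I_A` as a left `R_A`-module. -/
abbrev GGModule {n N : ℕ} (A : Matrix (Fin n) (Fin N) ℤ) : Type :=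
  GGRing n N ⧸ GGIdeal A

/-!
In `M[[t]]` the equation `∂_{N+1} F = τ^w F` reads `dF/dt = τ^w F`, so it says exactly that
`F = e^{t τ^w} F(0)`. The operator `z_{N+1} ∂_{N+1} = t d/dt` multiplies the `k`-th coefficient by
`k`, so the remaining equations of `GG(Ã)` say that each `F k` solves `GG(A)` with `E_i` replaced by
`E_i + k w_i`. For `k = 0` this is `GG(A)` itself. Conversely, `E_i` commutes with `τ^v` up to
adding `v_i`, so if `x` solves `GG(A)`, then all coefficients of `e^{t τ^w} x` solve the shifted
systems.
-/

section NoncommutativeProducts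

variable {ι : Type*}

theorem list_prod_map_mul_of_commute {M : Type*} [Monoid M] {f g : ι → M}
    (hgf : ∀ i j, Commute (g i) (f j)) (l : List ι) :
    (l.map fun i => f i * g i).prod = (l.map f).prod * (l.map g).prod := by
  induction l with
  | nil => simp
  | cons i l ih =>
    have hcomm : Commute (g i) (l.map f).prod :=
      Commute.list_prod_right _ _ (List.forall_mem_map.mpr fun j _ => hgf i j)
    simp only [List.map_cons, List.prod_cons, ih, hcomm.mul_mul_mul_comm]

variable {R : Type*} [Ring R] {x : R}

theorem semiconjBy_mul_add_intCast {a b : R} {e f : ℤ} (ha : SemiconjBy a x (x + e))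
    (hb : SemiconjBy b x (x + f)) : SemiconjBy (a * b) x (x + (e + f : ℤ)) := by
  simpa only [add_assoc, Int.cast_add] using (ha.add_right (Int.commute_cast a f)).mul_left hb

theorem semiconjBy_list_prod_add_intCast {f : ι → R} {e : ι → ℤ}
    (h : ∀ i, SemiconjBy (f i) x (x + e i)) (l : List ι) :
    SemiconjBy (l.map f).prod x (x + ((l.map e).sum : ℤ)) := by
  induction l with
  | nil => simp
  | cons i l ih => simpa only [List.map_cons, List.prod_cons, List.sum_cons]
    using semiconjBy_mul_add_intCast (h i) ih

theorem semiconjBy_units_zpow_add_intCast {u : Rˣ} (hu : SemiconjBy (u : R) x (x + 1)) (k : ℤ) :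
    SemiconjBy ((u ^ k : Rˣ) : R) x (x + k) := by
  have hinv : SemiconjBy ((u⁻¹ : Rˣ) : R) x (x + (-1 : ℤ)) := by
    have hshift : SemiconjBy (u : R) (x - 1) x := by
      simpa using hu.sub_right (SemiconjBy.one_right (u : R))
    simpa [sub_eq_add_neg] using hshift.units_inv_symm_left
  induction k with
  | zero => simp
  | succ k ih =>
    rw [zpow_add_one, Units.val_mul]
    exact semiconjBy_mul_add_intCast ih (by simpa using hu)
  | pred k ih =>
    rw [zpow_sub_one, Units.val_mul, sub_eq_add_neg]
    exact semiconjBy_mul_add_intCast ih hinv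

end NoncommutativeProducts

theorem isAddTorsionFree_of_algebra (K R M : Type*) [Field K] [CharZero K] [Ring R] [Algebra K R]
    [AddCommGroup M] [Module R M] : IsAddTorsionFree M :=
  letI : Module ℚ M := Module.compHom M ((algebraMap K R).comp (algebraMap ℚ K))
  .of_module_rat M

section ExpSeries

variable (K : Type*) {R M : Type*} [Field K] [Ring R] [Algebra K R] [AddCommGroup M] [Module R M]

theorem smul_algebraMap_smul_comm (r : R) (a : K) (x : M) :
    r • algebraMap K R a • x = algebraMap K R a • r • x := by
  rw [smul_smul, smul_smul, Algebra.commutes]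

/-- The coefficients of the formal power series `e^{t r} x`, the solution of `dF/dt = r F` with
initial value `x`. The module is not assumed to carry a `K`-action of its own, so `1 / m!` acts
through `R`. -/
def expSeries (r : R) (x : M) (m : ℕ) : M :=
  algebraMap K R (m.factorial : K)⁻¹ • r ^ m • x

@[simp]
theorem expSeries_zero (r : R) (x : M) : expSeries K r x 0 = x := by
  simp [expSeries]

variable [CharZero K]

theorem succ_nsmul_expSeries_succ (r : R) (x : M) (k : ℕ) :
    (k + 1) • expSeries K r x (k + 1) = r • expSeries K r x k := by
  have hfactorial : ((k + 1 : ℕ) : K) * ((k + 1).factorial : K)⁻¹ = (k.factorial : K)⁻¹ := by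
    rw [Nat.factorial_succ, Nat.cast_mul, mul_inv,
      mul_inv_cancel_left₀ (Nat.cast_ne_zero.mpr k.succ_ne_zero)]
  rw [expSeries, expSeries, smul_algebraMap_smul_comm, ← mul_smul r, ← pow_succ',
    ← Nat.cast_smul_eq_nsmul R, ← map_natCast (algebraMap K R), ← mul_smul, ← map_mul, hfactorial]

theorem eq_expSeries_iff {r : R} {F : ℕ → M} {x : M} :
    F = expSeries K r x ↔ F 0 = x ∧ ∀ k : ℕ, (k + 1) • F (k + 1) = r • F k := by
  constructor
  · rintro rfl
    exact ⟨expSeries_zero K r x, succ_nsmul_expSeries_succ K r x⟩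
  · rintro ⟨hzero, hsucc⟩
    have : IsAddTorsionFree M := isAddTorsionFree_of_algebra K R M
    funext m
    induction m with
    | zero => rw [hzero, expSeries_zero]
    | succ k ih =>
      apply nsmul_right_injective k.succ_ne_zero
      simp only [Nat.succ_eq_add_one, hsucc, ih, succ_nsmul_expSeries_succ]

end ExpSeries

section QuotientHom

variable {R M : Type*} [Ring R] [AddCommGroup M] [Module R M] {I : Submodule R R}

theorem quotientHom_mk (f : R ⧸ I →ₗ[R] M) (r : R) :
    f (Submodule.Quotient.mk r) = r • f (Submodule.Quotient.mk 1) := by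
  rw [← map_smul, ← Submodule.Quotient.mk_smul, smul_eq_mul, mul_one]

/-- The `R`-linear maps out of `R ⧸ I` are the elements of the target killed by the left ideal
`I`, a map corresponding to the image of `1`. -/
def quotientHomEquiv (I : Submodule R R) :
    (R ⧸ I →ₗ[R] M) ≃ {x : M // I ≤ LinearMap.ker (LinearMap.toSpanSingleton R M x)} where
  toFun f := ⟨f (Submodule.Quotient.mk 1), fun r hr => by
    rw [LinearMap.mem_ker, LinearMap.toSpanSingleton_apply, ← quotientHom_mk,
      (Submodule.Quotient.mk_eq_zero I).mpr hr, map_zero]⟩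
  invFun x := I.liftQ (LinearMap.toSpanSingleton R M x) x.2
  left_inv f := by ext; simp
  right_inv x := by ext; simp

end QuotientHom

namespace GGRing

variable {n N : ℕ}

theorem gen_t_semiconjBy_c (i : Fin n) :
    SemiconjBy (gen (N := N) (.t i)) (gen (.c i)) (gen (.c i) + 1) := by
  simpa [gen, SemiconjBy] using RingQuot.mkAlgHom_rel ℂ (GGRel.tc (N := N) i)

theorem gen_commute {g h : GGGen n N} (hgh : ¬ g.NonCommPair h) : Commute (gen g) (gen h) := by
  simpa [gen, Commute, SemiconjBy] using RingQuot.mkAlgHom_rel ℂ (GGRel.comm g h hgh)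

/-- The generator `τ_i` as a unit of `R_A`, with inverse the generator `τ_i⁻¹`. It serves to apply
the library's integer powers to `tpow`. -/
noncomputable def tauUnit (N : ℕ) (i : Fin n) : (GGRing n N)ˣ where
  val := gen (.t i)
  inv := gen (.tinv i)
  val_inv := by simpa [gen] using RingQuot.mkAlgHom_rel ℂ (GGRel.ttinv (N := N) i)
  inv_val := by simpa [gen] using RingQuot.mkAlgHom_rel ℂ (GGRel.tinvt (N := N) i)

theorem tpow_eq_zpow (i : Fin n) (k : ℤ) :
    tpow (N := N) i k = ((tauUnit N i ^ k : (GGRing n N)ˣ) : GGRing n N) := by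
  rcases lt_or_ge k 0 with hk | hk
  · obtain ⟨m, rfl⟩ := Int.eq_negSucc_of_lt_zero hk
    rw [tpow, if_neg hk.not_ge, zpow_negSucc, ← inv_pow, Units.val_pow_eq_pow_val]
    rfl
  · lift k to ℕ using hk
    simp [tpow, tauUnit]

theorem tpow_add (i : Fin n) (k l : ℤ) : tpow (N := N) i (k + l) = tpow i k * tpow i l := by
  simp only [tpow_eq_zpow, zpow_add, Units.val_mul]

theorem commute_tpow {x : GGRing n N} {i : Fin n} (hx : Commute x (gen (.t i))) (k : ℤ) :
    Commute x (tpow i k) := by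
  rw [tpow_eq_zpow]
  exact Commute.units_zpow_right (u := tauUnit N i) hx k

theorem tpow_commute_tpow (i j : Fin n) (k l : ℤ) : Commute (tpow (N := N) i k) (tpow j l) :=
  commute_tpow (commute_tpow (gen_commute id) k).symm l

theorem tpow_semiconjBy_c (i j : Fin n) (k : ℤ) :
    SemiconjBy (tpow (N := N) j k) (gen (.c i))
      (gen (.c i) + ((if j = i then k else 0 : ℤ) : GGRing n N)) := by
  split_ifs with hji
  · subst hji
    rw [tpow_eq_zpow]
    exact semiconjBy_units_zpow_add_intCast (u := tauUnit N j) (gen_t_semiconjBy_c j) k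
  · rw [Int.cast_zero, add_zero]
    exact (commute_tpow (gen_commute (g := .c i) (Ne.symm hji)) k).symm

theorem tauPow_eq_prod_map (v : Fin n → ℤ) :
    tauPow (N := N) v = ((List.finRange n).map fun i => tpow (N := N) i (v i)).prod := by
  rw [tauPow, List.ofFn_eq_map]

@[simp]
theorem tauPow_zero : tauPow (N := N) (0 : Fin n → ℤ) = 1 := by
  simp [tauPow_eq_prod_map, tpow_eq_zpow]

theorem tauPow_add (v w : Fin n → ℤ) : tauPow (N := N) (v + w) = tauPow v * tauPow w := by
  simp only [tauPow_eq_prod_map, Pi.add_apply, tpow_add]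
  exact list_prod_map_mul_of_commute (fun i j => tpow_commute_tpow i j _ _) _

theorem tauPow_nsmul (k : ℕ) (v : Fin n → ℤ) : tauPow (N := N) (k • v) = tauPow v ^ k := by
  induction k with
  | zero => simp
  | succ k ih => rw [succ_nsmul, tauPow_add, ih, pow_succ]

theorem commute_tauPow {x : GGRing n N} (hx : ∀ i, Commute x (gen (.t i))) (v : Fin n → ℤ) :
    Commute x (tauPow v) := by
  rw [tauPow_eq_prod_map]
  exact Commute.list_prod_right _ _ (List.forall_mem_map.mpr fun i _ => commute_tpow (hx i) _)

theorem commute_z_tauPow (j : Fin N) (v : Fin n → ℤ) : Commute (gen (.z j)) (tauPow v) :=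
  commute_tauPow (fun _ => gen_commute id) v

theorem commute_d_tauPow (j : Fin N) (v : Fin n → ℤ) : Commute (gen (.d j)) (tauPow v) :=
  commute_tauPow (fun _ => gen_commute id) v

theorem tauPow_semiconjBy_c (i : Fin n) (v : Fin n → ℤ) :
    SemiconjBy (tauPow (N := N) v) (gen (.c i)) (gen (.c i) + (v i : GGRing n N)) := by
  have hsum : ((List.finRange n).map fun j => if j = i then v j else 0).sum = v i := by
    rw [← List.ofFn_eq_map, List.sum_ofFn, Fintype.sum_ite_eq']
  rw [tauPow_eq_prod_map, ← hsum]
  exact semiconjBy_list_prod_add_intCast (fun j => tpow_semiconjBy_c i j (v j)) _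

theorem tauPow_semiconjBy_euler (A : Matrix (Fin n) (Fin N) ℤ) (i : Fin n) (v : Fin n → ℤ) :
    SemiconjBy (tauPow v) (euler A i) (euler A i + (v i : GGRing n N)) := by
  have hcomm : Commute (∑ j, (A i j : GGRing n N) * gen (.z j) * gen (.d j)) (tauPow v) :=
    Commute.sum_left _ _ _ fun j _ =>
      ((Int.cast_commute _ _).mul_left (commute_z_tauPow j v)).mul_left (commute_d_tauPow j v)
  rw [euler, add_assoc]
  exact SemiconjBy.add_right hcomm.symm (tauPow_semiconjBy_c i v)

end GGRing

/-- `x` solves the system `GG(A)` in which each Euler operator `E_i` is shifted to `E_i + v_i`.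
The system `GG(A)` itself is the case `v = 0`. -/
structure GGSolution {n N : ℕ} (A : Matrix (Fin n) (Fin N) ℤ) (v : Fin n → ℤ) {M : Type*}
    [AddCommGroup M] [Module (GGRing n N) M] (x : M) : Prop where
  euler_smul : ∀ i, (GGRing.euler A i + (v i : GGRing n N)) • x = 0
  d_smul : ∀ j, GGRing.gen (n := n) (.d j) • x = GGRing.tauPow (N := N) (fun i => A i j) • x

section Solutions

variable {n N : ℕ} {A : Matrix (Fin n) (Fin N) ℤ} {M : Type*} [AddCommGroup M]
  [Module (GGRing n N) M] {v : Fin n → ℤ} {x : M}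

theorem GGSolution.algebraMap_smul (hx : GGSolution A v x) (a : ℂ) :
    GGSolution A v (algebraMap ℂ (GGRing n N) a • x) where
  euler_smul i := by rw [smul_algebraMap_smul_comm, hx.euler_smul, smul_zero]
  d_smul j := by rw [smul_algebraMap_smul_comm, hx.d_smul, smul_algebraMap_smul_comm]

theorem GGSolution.tauPow_smul (hx : GGSolution A v x) (u : Fin n → ℤ) :
    GGSolution A (v + u) (GGRing.tauPow (N := N) u • x) where
  euler_smul i := by
    have hcomm := (GGRing.tauPow_semiconjBy_euler A i u).add_right (Int.commute_cast _ (v i))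
    rw [Pi.add_apply, Int.cast_add, add_comm (v i : GGRing n N), ← add_assoc, ← mul_smul,
      ← hcomm.eq, mul_smul, hx.euler_smul, smul_zero]
  d_smul j := by
    rw [← mul_smul, (GGRing.commute_d_tauPow j u).eq, mul_smul, hx.d_smul, ← mul_smul, ← mul_smul,
      ← GGRing.tauPow_add, ← GGRing.tauPow_add, add_comm]

theorem GGSolution.expSeries_apply (hx : GGSolution A v x) (w : Fin n → ℤ) (k : ℕ) :
    GGSolution A (v + k • w) (expSeries ℂ (GGRing.tauPow (N := N) w) x k) := by
  rw [expSeries, ← GGRing.tauPow_nsmul]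
  exact (hx.tauPow_smul (k • w)).algebraMap_smul _

theorem GGIdeal_le_ker_toSpanSingleton_iff :
    GGIdeal A ≤ LinearMap.ker (LinearMap.toSpanSingleton (GGRing n N) M x) ↔
      GGSolution A 0 x := by
  rw [GGIdeal, Submodule.span_le, Set.union_subset_iff, Set.range_subset_iff, Set.range_subset_iff]
  simp only [SetLike.mem_coe, LinearMap.mem_ker, LinearMap.toSpanSingleton_apply, sub_smul,
    sub_eq_zero]
  exact ⟨fun ⟨hE, hd⟩ => ⟨fun i => by simpa using hE i, hd⟩,
    fun h => ⟨fun i => by simpa using h.euler_smul i, h.d_smul⟩⟩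

/-- The homomorphisms from `GG(A)` to `M` as the solutions of `GG(A)` in `M`, a homomorphism
corresponding to the image of `[1]`. -/
noncomputable def GGModule.homEquiv (A : Matrix (Fin n) (Fin N) ℤ) (M : Type*) [AddCommGroup M]
    [Module (GGRing n N) M] : (GGModule A →ₗ[GGRing n N] M) ≃ {x : M // GGSolution A 0 x} :=
  (quotientHomEquiv (GGIdeal A)).trans
    (Equiv.subtypeEquivRight fun _ => GGIdeal_le_ker_toSpanSingleton_iff)

theorem GGModule.coe_homEquiv (f : GGModule A →ₗ[GGRing n N] M) :
    (GGModule.homEquiv A M f : M) = f (Submodule.Quotient.mk 1) :=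
  rfl

end Solutions

/-- The matrix `(A | w)`. -/
def appendCol {n N : ℕ} (A : Matrix (Fin n) (Fin N) ℤ) (w : Fin n → ℤ) :
    Matrix (Fin n) (Fin (N + 1)) ℤ :=
  fun i => Fin.snoc (A i) (w i)

@[simp]
theorem appendCol_castSucc {n N : ℕ} (A : Matrix (Fin n) (Fin N) ℤ) (w : Fin n → ℤ) (i : Fin n)
    (j : Fin N) : appendCol A w i j.castSucc = A i j :=
  Fin.snoc_castSucc ..

@[simp]
theorem appendCol_last {n N : ℕ} (A : Matrix (Fin n) (Fin N) ℤ) (w : Fin n → ℤ) (i : Fin n) :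
    appendCol A w i (Fin.last N) = w i :=
  Fin.snoc_last ..

/-- The `R_Ã`-action on `M[[t]]`, where `ℕ → M` is the group of coefficient sequences: the
generators of `R_A` act coefficientwise, `z_{N+1}` as multiplication by `t` and `∂_{N+1}` as
`d/dt`. -/
structure IsPowerSeriesAction (n N : ℕ) (M : Type*) [AddCommGroup M] [Module (GGRing n N) M]
    [Module (GGRing n (N + 1)) (ℕ → M)] : Prop where
  z_castSucc : ∀ (j : Fin N) (F : ℕ → M) (k : ℕ),
    (GGRing.gen (n := n) (N := N + 1) (.z j.castSucc) • F) k
      = GGRing.gen (n := n) (N := N) (.z j) • F k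
  d_castSucc : ∀ (j : Fin N) (F : ℕ → M) (k : ℕ),
    (GGRing.gen (n := n) (N := N + 1) (.d j.castSucc) • F) k
      = GGRing.gen (n := n) (N := N) (.d j) • F k
  c : ∀ (i : Fin n) (F : ℕ → M) (k : ℕ),
    (GGRing.gen (n := n) (N := N + 1) (.c i) • F) k = GGRing.gen (n := n) (N := N) (.c i) • F k
  t : ∀ (i : Fin n) (F : ℕ → M) (k : ℕ),
    (GGRing.gen (n := n) (N := N + 1) (.t i) • F) k = GGRing.gen (n := n) (N := N) (.t i) • F k
  tinv : ∀ (i : Fin n) (F : ℕ → M) (k : ℕ),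
    (GGRing.gen (n := n) (N := N + 1) (.tinv i) • F) k
      = GGRing.gen (n := n) (N := N) (.tinv i) • F k
  z_last : ∀ F : ℕ → M,
    (GGRing.gen (n := n) (N := N + 1) (.z (Fin.last N)) • F) 0 = 0 ∧
      ∀ k : ℕ, (GGRing.gen (n := n) (N := N + 1) (.z (Fin.last N)) • F) (k + 1) = F k
  d_last : ∀ (F : ℕ → M) (k : ℕ),
    (GGRing.gen (n := n) (N := N + 1) (.d (Fin.last N)) • F) k = (k + 1) • F (k + 1)

namespace IsPowerSeriesAction

variable {n N : ℕ} {M : Type*} [AddCommGroup M] [Module (GGRing n N) M]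
  [Module (GGRing n (N + 1)) (ℕ → M)]

theorem tpow_smul_apply (h : IsPowerSeriesAction n N M) (i : Fin n) (e : ℤ) (F : ℕ → M) (k : ℕ) :
    (GGRing.tpow (N := N + 1) i e • F) k = GGRing.tpow (N := N) i e • F k := by
  have hpow : ∀ {g : GGGen n (N + 1)} {g' : GGGen n N},
      (∀ F : ℕ → M, (GGRing.gen g • F) k = GGRing.gen g' • F k) →
        ∀ m : ℕ, (GGRing.gen g ^ m • F) k = GGRing.gen g' ^ m • F k := fun hg m => by
    have hiter := Function.Semiconj.iterate_right (f := Function.eval k) hg m F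
    rwa [smul_iterate, smul_iterate] at hiter
  unfold GGRing.tpow
  split_ifs
  · exact hpow (fun F => h.t i F k) _
  · exact hpow (fun F => h.tinv i F k) _

theorem tauPow_smul_apply (h : IsPowerSeriesAction n N M) (v : Fin n → ℤ) (F : ℕ → M) (k : ℕ) :
    (GGRing.tauPow (N := N + 1) v • F) k = GGRing.tauPow (N := N) v • F k := by
  simp only [GGRing.tauPow_eq_prod_map]
  induction List.finRange n with
  | nil => simp
  | cons i l ih => simp only [List.map_cons, List.prod_cons, mul_smul, h.tpow_smul_apply, ih]

theorem z_last_smul_d_last_smul_apply (h : IsPowerSeriesAction n N M) (F : ℕ → M) (k : ℕ) :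
    (GGRing.gen (n := n) (N := N + 1) (.z (Fin.last N)) •
      GGRing.gen (n := n) (N := N + 1) (.d (Fin.last N)) • F) k = k • F k := by
  cases k with
  | zero => rw [(h.z_last _).1, zero_smul]
  | succ k => rw [(h.z_last _).2, h.d_last]

theorem euler_appendCol_smul_apply (h : IsPowerSeriesAction n N M) (A : Matrix (Fin n) (Fin N) ℤ)
    (w : Fin n → ℤ) (i : Fin n) (F : ℕ → M) (k : ℕ) :
    (GGRing.euler (appendCol A w) i • F) k
      = (GGRing.euler A i + ((k • w) i : GGRing n N)) • F k := by
  have hsmul (a : ℤ) (G : ℕ → M) : (a • G) k = a • G k := rfl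
  have hlast : w i • k • F k = (k • w) i • F k := by
    rw [← natCast_zsmul, smul_smul, Pi.smul_apply, nsmul_eq_mul, mul_comm]
  simp only [GGRing.euler, Fin.sum_univ_castSucc, appendCol_castSucc, appendCol_last, add_smul,
    Finset.sum_smul, mul_smul, Pi.add_apply, Finset.sum_apply, Int.cast_smul_eq_zsmul, hsmul,
    h.z_castSucc, h.d_castSucc, h.c, h.z_last_smul_d_last_smul_apply]
  rw [hlast, add_right_comm]

theorem ggSolution_appendCol_iff (h : IsPowerSeriesAction n N M) {A : Matrix (Fin n) (Fin N) ℤ}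
    {v w : Fin n → ℤ} {F : ℕ → M} :
    GGSolution (appendCol A w) v F ↔ (∀ k : ℕ, GGSolution A (v + k • w) (F k)) ∧
      ∀ k : ℕ, (k + 1) • F (k + 1) = GGRing.tauPow (N := N) w • F k := by
  have heuler : (∀ i, (GGRing.euler (appendCol A w) i + (v i : GGRing n (N + 1))) • F = 0) ↔
      ∀ k i, (GGRing.euler A i + ((v + k • w) i : GGRing n N)) • F k = 0 := by
    have hsmul (a : ℤ) (k : ℕ) : (a • F) k = a • F k := rfl
    simp only [add_smul, Pi.add_apply, Int.cast_add, Int.cast_smul_eq_zsmul, funext_iff,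
      h.euler_appendCol_smul_apply, hsmul, add_assoc, add_comm (v _ • F _)]
    exact forall_comm
  have hd : (∀ j, GGRing.gen (n := n) (.d j) • F
        = GGRing.tauPow (N := N + 1) (fun i => appendCol A w i j) • F) ↔
      (∀ k j, GGRing.gen (n := n) (.d j) • F k = GGRing.tauPow (N := N) (fun i => A i j) • F k) ∧
        ∀ k : ℕ, (k + 1) • F (k + 1) = GGRing.tauPow (N := N) w • F k := by
    simp only [Fin.forall_fin_succ', appendCol_castSucc, appendCol_last, funext_iff,
      h.d_castSucc, h.d_last, h.tauPow_smul_apply]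
    rw [forall_comm]
  exact ⟨fun hF => ⟨fun k => ⟨heuler.mp hF.euler_smul k, (hd.mp hF.d_smul).1 k⟩,
      (hd.mp hF.d_smul).2⟩,
    fun hF => ⟨heuler.mpr fun k => (hF.1 k).euler_smul,
      hd.mpr ⟨fun k => (hF.1 k).d_smul, hF.2⟩⟩⟩

/-- The boundary value map on the level of solutions, with inverse `x ↦ e^{t τ^w} x`. -/
noncomputable def boundaryValueEquiv (h : IsPowerSeriesAction n N M) (A : Matrix (Fin n) (Fin N) ℤ)
    (v w : Fin n → ℤ) :
    {F : ℕ → M // GGSolution (appendCol A w) v F} ≃ {x : M // GGSolution A v x} where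
  toFun F := ⟨F.1 0, by simpa using (h.ggSolution_appendCol_iff.mp F.2).1 0⟩
  invFun x := ⟨expSeries ℂ (GGRing.tauPow w) x.1, h.ggSolution_appendCol_iff.mpr
    ⟨x.2.expSeries_apply w, succ_nsmul_expSeries_succ ℂ _ _⟩⟩
  left_inv F := Subtype.ext <| Eq.symm <|
    (eq_expSeries_iff ℂ).mpr ⟨rfl, (h.ggSolution_appendCol_iff.mp F.2).2⟩
  right_inv x := Subtype.ext <| expSeries_zero ℂ _ _

theorem coe_boundaryValueEquiv (h : IsPowerSeriesAction n N M) {A : Matrix (Fin n) (Fin N) ℤ}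
    {v w : Fin n → ℤ} (F : {F : ℕ → M // GGSolution (appendCol A w) v F}) :
    (h.boundaryValueEquiv A v w F : M) = F.1 0 :=
  rfl

theorem coe_boundaryValueEquiv_symm (h : IsPowerSeriesAction n N M)
    {A : Matrix (Fin n) (Fin N) ℤ} {v w : Fin n → ℤ} (x : {x : M // GGSolution A v x}) :
    ((h.boundaryValueEquiv A v w).symm x : ℕ → M) =
      expSeries ℂ (GGRing.tauPow (N := N) w) x.1 :=
  rfl

end IsPowerSeriesAction

theorem gg_boundary_value_bijective_general {n N : ℕ} (A : Matrix (Fin n) (Fin N) ℤ)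
    (w : Fin n → ℤ) (M : Type*) [AddCommGroup M] [Module (GGRing n N) M]
    [Module (GGRing n (N + 1)) (ℕ → M)] (hM : IsPowerSeriesAction n N M) :
    ∃ bv : (GGModule (appendCol A w) →ₗ[GGRing n (N + 1)] (ℕ → M)) →
        (GGModule A →ₗ[GGRing n N] M),
      (∀ F : GGModule (appendCol A w) →ₗ[GGRing n (N + 1)] (ℕ → M),
        bv F (Submodule.Quotient.mk 1) = F (Submodule.Quotient.mk 1) 0) ∧
      Function.Bijective bv ∧
      (∀ (F : GGModule (appendCol A w) →ₗ[GGRing n (N + 1)] (ℕ → M))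
         (f : GGModule A →ₗ[GGRing n N] M),
        bv F = f ↔ ∀ m : ℕ,
          F (Submodule.Quotient.mk 1) m
            = (algebraMap ℂ (GGRing n N) ((m.factorial : ℂ)⁻¹)) •
                f (Submodule.Quotient.mk (GGRing.tauPow (fun i' => (m : ℤ) * w i')))) := by
  let bv := ((GGModule.homEquiv (appendCol A w) (ℕ → M)).trans
    (hM.boundaryValueEquiv A 0 w)).trans (GGModule.homEquiv A M).symm
  have hbv (F) : bv F (Submodule.Quotient.mk 1) = F (Submodule.Quotient.mk 1) 0 := by
    rw [← GGModule.coe_homEquiv, Equiv.trans_apply, Equiv.apply_symm_apply, Equiv.trans_apply,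
      hM.coe_boundaryValueEquiv, GGModule.coe_homEquiv]
  have hinv (F f) : bv F = f ↔ F (Submodule.Quotient.mk 1) =
      expSeries ℂ (GGRing.tauPow (N := N) w) (f (Submodule.Quotient.mk 1)) := by
    rw [Equiv.trans_apply, Equiv.symm_apply_eq, Equiv.trans_apply, ← Equiv.eq_symm_apply,
      Subtype.ext_iff, hM.coe_boundaryValueEquiv_symm, GGModule.coe_homEquiv, GGModule.coe_homEquiv]
  have hmul (m : ℕ) : (fun i => (m : ℤ) * w i) = m • w := by
    ext i
    rw [Pi.smul_apply, nsmul_eq_mul]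
  refine ⟨bv, hbv, bv.bijective, fun F f => ?_⟩
  simp only [hinv, funext_iff, expSeries, hmul, GGRing.tauPow_nsmul,
    quotientHom_mk f (GGRing.tauPow w ^ _)]

/-- with `Ã = (A | a(N+1))` and `M[[t]] = ℕ → M` equipped with the
`R_Ã`-module structure in which the `R_A`-generators act coefficientwise, `z_{N+1}` acts
as multiplication by `t` and `∂_{N+1}` as `d/dt`, the boundary value map
`bv : Hom_{R_Ã}(GG(Ã), M[[t]]) → Hom_{R_A}(GG(A), M)`, `bv(F)([1]) = F([1])(0)`, is
a well-defined bijection whose inverse sends `f` to the unique `R_Ã`-linear map with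
`F([1]) = Σ_m f([τ^{m·a(N+1)}]) t^m/m!`. -/
theorem gg_boundary_value_bijective {n N : ℕ} (A : Matrix (Fin n) (Fin N) ℤ)
    (hspan : ∀ v : Fin n → ℚ, ∃ u : Fin N → ℚ,
      ∀ i : Fin n, v i = ∑ j : Fin N, (A i j : ℚ) * u j)
    (w : Fin n → ℤ)
    (Atil : Matrix (Fin n) (Fin (N + 1)) ℤ)
    (hAtil : ∀ (i : Fin n) (j : Fin (N + 1)),
      Atil i j = if h : (j : ℕ) < N then A i ⟨j, h⟩ else w i)
    (M : Type*) [AddCommGroup M] [Module (GGRing n N) M]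
    [Module (GGRing n (N + 1)) (ℕ → M)]
    (hz : ∀ (j : Fin N) (F : ℕ → M) (k : ℕ),
      (GGRing.gen (n := n) (N := N + 1) (GGGen.z (Fin.castSucc j)) • F) k
        = GGRing.gen (n := n) (N := N) (GGGen.z j) • F k)
    (hd : ∀ (j : Fin N) (F : ℕ → M) (k : ℕ),
      (GGRing.gen (n := n) (N := N + 1) (GGGen.d (Fin.castSucc j)) • F) k
        = GGRing.gen (n := n) (N := N) (GGGen.d j) • F k)
    (hcc : ∀ (i : Fin n) (F : ℕ → M) (k : ℕ),
      (GGRing.gen (n := n) (N := N + 1) (GGGen.c i) • F) k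
        = GGRing.gen (n := n) (N := N) (GGGen.c i) • F k)
    (ht : ∀ (i : Fin n) (F : ℕ → M) (k : ℕ),
      (GGRing.gen (n := n) (N := N + 1) (GGGen.t i) • F) k
        = GGRing.gen (n := n) (N := N) (GGGen.t i) • F k)
    (htinv : ∀ (i : Fin n) (F : ℕ → M) (k : ℕ),
      (GGRing.gen (n := n) (N := N + 1) (GGGen.tinv i) • F) k
        = GGRing.gen (n := n) (N := N) (GGGen.tinv i) • F k)
    (hzlast : ∀ F : ℕ → M,
      (GGRing.gen (n := n) (N := N + 1) (GGGen.z (Fin.last N)) • F) 0 = 0 ∧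
      ∀ k : ℕ, (GGRing.gen (n := n) (N := N + 1) (GGGen.z (Fin.last N)) • F) (k + 1) = F k)
    (hdlast : ∀ (F : ℕ → M) (k : ℕ),
      (GGRing.gen (n := n) (N := N + 1) (GGGen.d (Fin.last N)) • F) k = (k + 1) • F (k + 1)) :
    ∃ bv : (GGModule Atil →ₗ[GGRing n (N + 1)] (ℕ → M)) →
        (GGModule A →ₗ[GGRing n N] M),
      (∀ F : GGModule Atil →ₗ[GGRing n (N + 1)] (ℕ → M),
        bv F (Submodule.Quotient.mk 1) = F (Submodule.Quotient.mk 1) 0) ∧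
      Function.Bijective bv ∧
      (∀ (F : GGModule Atil →ₗ[GGRing n (N + 1)] (ℕ → M))
         (f : GGModule A →ₗ[GGRing n N] M),
        bv F = f ↔ ∀ m : ℕ,
          F (Submodule.Quotient.mk 1) m
            = (algebraMap ℂ (GGRing n N) ((m.factorial : ℂ)⁻¹)) •
                f (Submodule.Quotient.mk (GGRing.tauPow (fun i' => (m : ℤ) * w i')))) := by
  obtain rfl : Atil = appendCol A w := by ext i j; exact hAtil i j
  exact gg_boundary_value_bijective_general A w M ⟨hz, hd, hcc, ht, htinv, hzlast, hdlast⟩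
end
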